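/- Root structure of competing power nonlinearities in the sign-indefinite regime: let 0 < α₂ < α₁ and 1 < a₂ < α₁/α₂, and set f(r) := (r^{α₁} − 1) − a₂·(r^{α₂} − 1) for r ≥ 0. Then f has exactly two zeros in (0,∞): there is a unique ρ₁ ∈ (0,1) with f(ρ₁) = 0, one has f(1) = 0, and f(r) ≠ 0 for every r ∈ (0,∞) with r ≠ ρ₁ and r ≠ 1. Moreover f(r) > 0 for 0 < r < ρ₁, f(r) < 0 for ρ₁ < r < 1, and f(r) > 0 for r > 1. -/

import Mathlib

/-!
Existence of `ρ₁`: `f(0) = a₂ - 1 > 0`, while `f(1) = 0` and `f'(1) = α₁ - a₂ α₂ > 0` make `f`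
negative just to the left of `1`, so `f` vanishes somewhere in `(0, 1)`.

Signs: `f` need not be convex, but `s = r ^ α₂` turns it into
`(s ^ (α₁ / α₂) - 1) - a₂ (s - 1)`, which is strictly convex. As the substitution is increasing,
`f` is strictly quasiconvex: between two points it stays below the larger of its values there.
Applied to the triples `r < ρ₁ < 1`, `ρ₁ < r < 1` and `ρ₁ < 1 < r`, this gives the three signs.
-/

open Set Filter Topology

lemma exists_mem_Ioo_lt_of_deriv_pos {f : ℝ → ℝ} {a b : ℝ} (hab : a < b)
    (hf' : 0 < deriv f b) : ∃ x ∈ Ioo a b, f x < f b := by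
  have sign_near : ∀ᶠ x in 𝓝[<] b, SignType.sign (f x - f b) = SignType.sign (x - b) :=
    (eventually_nhdsWithin_sign_eq_of_deriv_pos (f := fun x => f x - f b)
      (by rwa [deriv_sub_const]) (sub_self _)).filter_mono nhdsWithin_le_nhds
  obtain ⟨x, hsign, hx⟩ := (sign_near.and (Ioo_mem_nhdsLT hab)).exists
  have hneg : f x - f b < 0 := sign_eq_neg_one_iff.1 (hsign.trans (sign_neg (sub_neg.2 hx.2)))
  exact ⟨x, hx, sub_neg.1 hneg⟩

lemma exists_mem_Ioo_eq_zero_of_deriv_pos {f : ℝ → ℝ} {a b : ℝ} (hab : a < b)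
    (hf : ContinuousOn f (Icc a b)) (ha : 0 < f a) (hb : f b = 0) (hf' : 0 < deriv f b) :
    ∃ x ∈ Ioo a b, f x = 0 := by
  obtain ⟨t, ht, hft⟩ := exists_mem_Ioo_lt_of_deriv_pos hab hf'
  obtain ⟨x, hx, hfx⟩ := intermediate_value_Ioo' ht.1.le
    (hf.mono (Icc_subset_Icc_right ht.2.le)) ⟨hft.trans_eq hb, ha⟩
  exact ⟨x, ⟨hx.1, hx.2.trans ht.2⟩, hfx⟩

/-- The competing power nonlinearity `f(r) = (r ^ α - 1) - a (r ^ β - 1)`, normalized so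
that `f(1) = 0` and the first power has coefficient `1`. Rescaling the exponents to `α / β` and `1`
expresses it in the variable `s = r ^ β`. -/
noncomputable def competingPowers (α β a r : ℝ) : ℝ :=
  (r ^ α - 1) - a * (r ^ β - 1)

namespace competingPowers

variable {α β a : ℝ}

lemma apply_zero (hα : α ≠ 0) (hβ : β ≠ 0) : competingPowers α β a 0 = a - 1 := by
  simp only [competingPowers, Real.zero_rpow hα, Real.zero_rpow hβ]
  ring

lemma apply_one : competingPowers α β a 1 = 0 := by
  simp [competingPowers]

protected lemma continuous (hα : 0 ≤ α) (hβ : 0 ≤ β) : Continuous (competingPowers α β a) :=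
  ((Real.continuous_rpow_const hα).sub continuous_const).sub
    (((Real.continuous_rpow_const hβ).sub continuous_const).const_mul a)

protected lemma hasDerivAt {r : ℝ} (hr : r ≠ 0) :
    HasDerivAt (competingPowers α β a) (α * r ^ (α - 1) - a * (β * r ^ (β - 1))) r :=
  ((Real.hasDerivAt_rpow_const (.inl hr)).sub_const 1).sub
    (((Real.hasDerivAt_rpow_const (.inl hr)).sub_const 1).const_mul a)

lemma deriv_one : deriv (competingPowers α β a) 1 = α - a * β := by
  simpa using (competingPowers.hasDerivAt (α := α) (β := β) (a := a) one_ne_zero).deriv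

lemma eq_comp_rpow (hβ : β ≠ 0) {r : ℝ} (hr : 0 ≤ r) :
    competingPowers α β a r = competingPowers (α / β) 1 a (r ^ β) := by
  simp only [competingPowers, ← Real.rpow_mul hr, mul_div_cancel₀ α hβ, mul_one]

lemma strictConvexOn (hα : 1 < α) : StrictConvexOn ℝ (Ici 0) (competingPowers α 1 a) := by
  have affine : ConvexOn ℝ (Ici 0) fun s : ℝ => -a * s + (a - 1) :=
    ((LinearMap.mulLeft ℝ (-a)).convexOn (convex_Ici 0)).add_const (a - 1)
  refine ((strictConvexOn_rpow hα).add_convexOn affine).congr fun s _ => ?_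
  simp only [competingPowers, Pi.add_apply, Real.rpow_one]
  ring

lemma lt_max (hβ : 0 < β) (hαβ : β < α) {u r v : ℝ} (hu : 0 ≤ u) (hur : u < r) (hrv : r < v) :
    competingPowers α β a r < max (competingPowers α β a u) (competingPowers α β a v) := by
  have hr : 0 ≤ r := hu.trans hur.le
  have hv : 0 ≤ v := hr.trans hrv.le
  have hur' : u ^ β < r ^ β := Real.rpow_lt_rpow hu hur hβ
  have hrv' : r ^ β < v ^ β := Real.rpow_lt_rpow hr hrv hβ
  rw [eq_comp_rpow hβ.ne' hu, eq_comp_rpow hβ.ne' hr, eq_comp_rpow hβ.ne' hv]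
  refine (strictConvexOn ((one_lt_div hβ).2 hαβ)).lt_on_openSegment
    (Real.rpow_nonneg hu β) (Real.rpow_nonneg hv β) (hur'.trans hrv').ne ?_
  rw [openSegment_eq_Ioo (hur'.trans hrv')]
  exact ⟨hur', hrv'⟩

lemma exists_mem_Ioo_eq_zero (hβ : 0 < β) (ha : 1 < a) (haβ : a * β < α) :
    ∃ ρ ∈ Ioo (0 : ℝ) 1, competingPowers α β a ρ = 0 := by
  have hα : 0 < α := (mul_pos (one_pos.trans ha) hβ).trans haβ
  refine exists_mem_Ioo_eq_zero_of_deriv_pos one_pos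
    (competingPowers.continuous hα.le hβ.le).continuousOn ?_ apply_one ?_
  · rw [apply_zero hα.ne' hβ.ne']
    exact sub_pos.2 ha
  · rw [deriv_one]
    exact sub_pos.2 haβ

end competingPowers

/-- Root structure of competing power nonlinearities in the sign-indefinite regime:
for `0 < α₂ < α₁`, `1 < a₂ < α₁/α₂` and `f r = (r^α₁ - 1) - a₂ (r^α₂ - 1)`, `f` has
exactly two zeros in `(0,∞)`: a unique `ρ₁ ∈ (0,1)` and `1`, with `f > 0` on `(0,ρ₁)`,
`f < 0` on `(ρ₁,1)` and `f > 0` on `(1,∞)`. -/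
theorem root_structure_competing_powers
    (α₁ α₂ a₂ : ℝ) (hα₂ : 0 < α₂) (hα : α₂ < α₁)
    (ha₂ : 1 < a₂) (ha₂' : a₂ < α₁ / α₂) :
    ∃ ρ₁ ∈ Set.Ioo (0:ℝ) 1,
      ((ρ₁ ^ α₁ - 1) - a₂ * (ρ₁ ^ α₂ - 1) = 0) ∧
      (((1:ℝ) ^ α₁ - 1) - a₂ * ((1:ℝ) ^ α₂ - 1) = 0) ∧
      (∀ r : ℝ, 0 < r → r ≠ ρ₁ → r ≠ 1 → (r ^ α₁ - 1) - a₂ * (r ^ α₂ - 1) ≠ 0) ∧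
      (∀ r : ℝ, 0 < r → r < ρ₁ → 0 < (r ^ α₁ - 1) - a₂ * (r ^ α₂ - 1)) ∧
      (∀ r : ℝ, ρ₁ < r → r < 1 → (r ^ α₁ - 1) - a₂ * (r ^ α₂ - 1) < 0) ∧
      (∀ r : ℝ, 1 < r → 0 < (r ^ α₁ - 1) - a₂ * (r ^ α₂ - 1)) := by
  obtain ⟨ρ, hρ, hfρ⟩ :=
    competingPowers.exists_mem_Ioo_eq_zero hα₂ ha₂ ((lt_div_iff₀ hα₂).1 ha₂')
  have hf1 : competingPowers α₁ α₂ a₂ 1 = 0 := competingPowers.apply_one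
  have pos_left : ∀ r, 0 < r → r < ρ → 0 < competingPowers α₁ α₂ a₂ r := fun r hr hrρ => by
    simpa [hfρ, hf1] using competingPowers.lt_max (a := a₂) hα₂ hα hr.le hrρ hρ.2
  have neg_between : ∀ r, ρ < r → r < 1 → competingPowers α₁ α₂ a₂ r < 0 := fun r hρr hr => by
    simpa [hfρ, hf1] using competingPowers.lt_max (a := a₂) hα₂ hα hρ.1.le hρr hr
  have pos_right : ∀ r, 1 < r → 0 < competingPowers α₁ α₂ a₂ r := fun r hr => by
    simpa [hfρ, hf1] using competingPowers.lt_max (a := a₂) hα₂ hα hρ.1.le hρ.2 hr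
  refine ⟨ρ, hρ, hfρ, hf1, fun r hr hrρ hr1 => ?_, pos_left, neg_between, pos_right⟩
  rcases hrρ.lt_or_gt with hlt | hgt
  · exact (pos_left r hr hlt).ne'
  · rcases hr1.lt_or_gt with hlt1 | hgt1
    · exact (neg_between r hgt hlt1).ne
    · exact (pos_right r hgt1).ne'
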